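/- Let n ≥ 1, let λ : G → A be a group homomorphism, and let f : C^{gp}_{n+1}(M;ℤ)_G → A be a normalized group (n+1)-cocycle, i.e. a homomorphism with f(D^{gp}_{n+1}(M;ℤ)_G) = 0 and f ∘ ∂^{gp}_{n+2} = 0. Then both Φ_f := f ∘ ψ_n ∘ γ_n ∘ proj_n : P_n(X;ℤ)_X → A and Φ_{f,λ} := (f ⊗ id_A) ∘ ψ_{n,λ} ∘ γ_n ∘ proj_n : P_n(X;ℤ)_X → A ⊗_ℤ A vanish on D_n(X;ℤ)_X and satisfy Φ_f ∘ ∂_{n+1} = 0 and Φ_{f,λ} ∘ ∂_{n+1} = 0 on P_{n+1}(X;ℤ)_X; that is, they define n-cocycles of the G-Alexander multiple conjugation biquandle X with X-set X, i.e. cocycles of the complex C_*(X;ℤ)_X = P_*(X;ℤ)_X/D_*(X;ℤ)_X. -/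

import Mathlib

open FreeAbelianGroup
open scoped TensorProduct

namespace GAlex

variable {G M A : Type*} [Group G] [AddCommGroup M] [DistribMulAction Gᵐᵒᵖ M] [AddCommGroup A]

/-- The right action `m · g` of a group element `g : G` on `m : M`
(coming from the right `ℤ[G]`-module structure on `M`). -/
def ract (m : M) (g : G) : M := MulOpposite.op g • m

variable (φ : G →* G)

/-- The operation `(m,g) ⊳ (n,h) = (mh + n(φ(h) − h), h⁻¹gh)` of the `G`-Alexander biquandle. -/
def under (x y : M × G) : M × G :=
  (ract x.1 y.2 + ract y.1 (φ y.2) - ract y.1 y.2, y.2⁻¹ * x.2 * y.2)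

/-- The operation `(m,g) ⊚ (n,h) = (mφ(h), g)` of the `G`-Alexander biquandle. -/
def overOp (x y : M × G) : M × G := (ract x.1 (φ y.2), x.2)

/-- The face `g_{⟨p⟩}` (delete the `p`-th entry). -/
def dGdel (n : ℕ) (p : Fin (n + 1)) (g : Fin (n + 1) → G) : Fin n → G :=
  fun j => g (p.succAbove j)

/-- The face `g_{⟨⊲p⟩}` (conjugate the first entries by `g p` and delete the `p`-th entry). -/
def dGconj (n : ℕ) (p : Fin (n + 1)) (g : Fin (n + 1) → G) : Fin n → G :=
  fun j => if (j : ℕ) < (p : ℕ) then (g p)⁻¹ * g j.castSucc * g p else g j.succ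

/-- The face `m_{⟨p⟩}` (merge the two entries adjacent to position `p`;
for `p = 0` drop the first entry). -/
def dMmer (n : ℕ) (p : Fin (n + 1)) (m : Fin (n + 1) → M) : Fin n → M :=
  fun j =>
    if (j : ℕ) + 1 < (p : ℕ) then m j.castSucc
    else if (j : ℕ) + 1 = (p : ℕ) then m j.castSucc + m j.succ
    else m j.succ

/-- The face `m_{⟨⊲p⟩}`. -/
def dMconj (n : ℕ) (p : Fin (n + 1)) (g : Fin (n + 1) → G) (m : Fin (n + 1) → M) : Fin n → M :=
  fun j =>
    if (j : ℕ) + 1 < (p : ℕ) then ract (m j.castSucc) (g p)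
    else if (j : ℕ) + 1 = (p : ℕ) then ract (m j.castSucc) (g p) + ract (m j.succ) (φ (g p))
    else ract (m j.succ) (φ (g p))

/-- The boundary map `∂^{BR_U}_{n+1} : C^{BR_U}_{n+1}(X;ℤ) → C^{BR_U}_n(X;ℤ)`
(the boundary `∂^{BR_U}_k` is `0` for `k ≤ 1`, which agrees with this formula at `n = 0`). -/
def dBRU (n : ℕ) :
    FreeAbelianGroup ((Fin (n + 1) → G) × (Fin (n + 1) → M)) →+
      FreeAbelianGroup ((Fin n → G) × (Fin n → M)) :=
  FreeAbelianGroup.lift fun x =>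
    ∑ p : Fin (n + 1),
      (-1 : ℤ) ^ (p : ℕ) •
        (FreeAbelianGroup.of (dGdel n p x.1, dMmer n p x.2) -
          FreeAbelianGroup.of (dGconj n p x.1, dMconj φ n p x.1 x.2))

/-- The birack boundary map `∂^{BR}_{n+1} : C^{BR}_{n+1}(X;ℤ) → C^{BR}_n(X;ℤ)`
for the `G`-Alexander biquandle `X = M × G` (with trivial `X`-set). -/
def dBR (n : ℕ) :
    FreeAbelianGroup (Fin (n + 1) → M × G) →+ FreeAbelianGroup (Fin n → M × G) :=
  FreeAbelianGroup.lift fun x =>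
    ∑ p : Fin (n + 1),
      (-1 : ℤ) ^ (p : ℕ) •
        (FreeAbelianGroup.of (fun j => x (p.succAbove j)) -
          FreeAbelianGroup.of (fun j : Fin n =>
            if (j : ℕ) < (p : ℕ) then under φ (x j.castSucc) (x p)
            else overOp φ (x j.succ) (x p)))

/-- `γ_n((m₁,g₁),…,(m_n,g_n)) = (g₁,…,g_n; m₁−m₂, …, m_{n−1}−m_n, m_n)`. -/
def gammaMap (n : ℕ) :
    FreeAbelianGroup (Fin n → M × G) →+ FreeAbelianGroup ((Fin n → G) × (Fin n → M)) :=
  FreeAbelianGroup.lift fun x =>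
    FreeAbelianGroup.of
      (fun j => (x j).2,
       fun j => (x j).1 - if h : (j : ℕ) + 1 < n then (x ⟨(j : ℕ) + 1, h⟩).1 else 0)

/-- `r_n(g₁,…,g_n; m₁,…,m_n) = ((m₁+⋯+m_n, g₁), (m₂+⋯+m_n, g₂), …, (m_n, g_n))`. -/
def rMap (n : ℕ) :
    FreeAbelianGroup ((Fin n → G) × (Fin n → M)) →+ FreeAbelianGroup (Fin n → M × G) :=
  FreeAbelianGroup.lift fun p =>
    FreeAbelianGroup.of fun j => ((∑ i ∈ Finset.Ici j, p.2 i), p.1 j)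

/-- The boundary map `∂^{BR_U}_{d+1}` of `C^{BR_U}_*(X;ℤ)_X` (the version with `X`-set `X`,
whose degree-`d` chain group is free on `(1+d)`-tuples); it is `0` in degrees `≤ 1`. -/
def dBRUX : (d : ℕ) →
    FreeAbelianGroup ((Fin (d + 2) → G) × (Fin (d + 2) → M)) →+
      FreeAbelianGroup ((Fin (d + 1) → G) × (Fin (d + 1) → M))
  | 0 => 0
  | d + 1 =>
    FreeAbelianGroup.lift fun x =>
      ∑ i : Fin (d + 2),
        (-1 : ℤ) ^ (i : ℕ) •
          (FreeAbelianGroup.of (dGdel (d + 2) i.succ x.1, dMmer (d + 2) i.succ x.2) -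
            FreeAbelianGroup.of (dGconj (d + 2) i.succ x.1, dMconj φ (d + 2) i.succ x.1 x.2))

/-- The boundary map `∂^{BR}_{d+1}` of `C^{BR}_*(X;ℤ)_X` (the version with `X`-set `X`);
it is `0` in degrees `≤ 1`. -/
def dBRX : (d : ℕ) →
    FreeAbelianGroup (Fin (d + 2) → M × G) →+ FreeAbelianGroup (Fin (d + 1) → M × G)
  | 0 => 0
  | d + 1 =>
    FreeAbelianGroup.lift fun x =>
      ∑ i : Fin (d + 2),
        (-1 : ℤ) ^ (i : ℕ) •
          (FreeAbelianGroup.of (fun j => x (i.succ.succAbove j)) -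
            FreeAbelianGroup.of (fun j : Fin (d + 2) =>
              if (j : ℕ) < (i : ℕ) + 1 then under φ (x j.castSucc) (x i.succ)
              else overOp φ (x j.succ) (x i.succ)))


/-- The subgroup of `G`-coinvariants relations in `C^{gp}_n(M;ℤ)`:
generated by all `(m₁g,…,m_ng) − (m₁,…,m_n)`. -/
def coinvSub (n : ℕ) : AddSubgroup (FreeAbelianGroup (Fin n → M)) :=
  AddSubgroup.closure
    {z | ∃ (m : Fin n → M) (g : G),
        z = FreeAbelianGroup.of (fun i => ract (m i) g) - FreeAbelianGroup.of m}

/-- The coinvariant group chain group `C^{gp}_n(M;ℤ)_G`. -/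
abbrev CgpG (n : ℕ) : Type _ :=
  FreeAbelianGroup (Fin n → M) ⧸ coinvSub (G := G) (M := M) n

/-- The group-homology boundary map `∂^{gp}_{n+1} : C^{gp}_{n+1}(M;ℤ) → C^{gp}_n(M;ℤ)`
(it is `0` in degrees `≤ 1`, which agrees with this formula at `n = 0`). -/
def dgp (n : ℕ) :
    FreeAbelianGroup (Fin (n + 1) → M) →+ FreeAbelianGroup (Fin n → M) :=
  FreeAbelianGroup.lift fun m =>
    (∑ p : Fin (n + 1), (-1 : ℤ) ^ (p : ℕ) • FreeAbelianGroup.of (dMmer n p m)) +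
      (-1 : ℤ) ^ (n + 1) • FreeAbelianGroup.of fun j : Fin n => m j.castSucc

/-- `|k| = k₁ + ⋯ + k_n`. -/
def wt {n : ℕ} (k : Fin n → Bool) : ℕ := ∑ i, if k i then 1 else 0

/-- `g_{k,i} = φ(g₀^{k₀} ⋯ g_i^{k_i}) · g_{i+1}^{k_{i+1}} ⋯ g_{n-1}^{k_{n-1}}`
(indices written `0`-based; the products are ordered). -/
def gki {n : ℕ} (g : Fin n → G) (k : Fin n → Bool) (i : Fin n) : G :=
  φ ((((List.finRange n).filter fun j => decide (j ≤ i)).map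
        fun j => if k j then g j else 1).prod) *
    (((List.finRange n).filter fun j => decide (i < j)).map
        fun j => if k j then g j else 1).prod

/-- The value of `ψ` on a generator:
`Σ_{k, k₀ = 0} (−1)^{|k|} (m₀ g_{k,0}, …, m_n g_{k,n})`, as an element of the free
abelian group (before passing to coinvariants). -/
def psiVal (n : ℕ) (x : (Fin (n + 1) → G) × (Fin (n + 1) → M)) :
    FreeAbelianGroup (Fin (n + 1) → M) :=
  ∑ k ∈ Finset.univ.filter fun k : Fin (n + 1) → Bool => k 0 = false,
    (-1 : ℤ) ^ wt k • FreeAbelianGroup.of fun i => ract (x.2 i) (gki φ x.1 k i)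

/-- `ψ` as a homomorphism into the free abelian group (before coinvariants). -/
def psiFree (n : ℕ) :
    FreeAbelianGroup ((Fin (n + 1) → G) × (Fin (n + 1) → M)) →+
      FreeAbelianGroup (Fin (n + 1) → M) :=
  FreeAbelianGroup.lift (psiVal φ n)

/-- The homomorphism `ψ : C^{BR_U} → C^{gp}(M;ℤ)_G`. -/
def psiG (n : ℕ) :
    FreeAbelianGroup ((Fin (n + 1) → G) × (Fin (n + 1) → M)) →+
      CgpG (G := G) (M := M) (n + 1) :=
  (QuotientAddGroup.mk' (coinvSub (G := G) (M := M) (n + 1))).comp (psiFree φ n)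

/-- The homomorphism `ψ_{•,λ}`, sending a generator `x` to `ψ(x) ⊗ λ(x₁)` where `x₁` is the
first `G`-entry of `x`. -/
noncomputable def psiLam (lam : G → A) (n : ℕ) :
    FreeAbelianGroup ((Fin (n + 1) → G) × (Fin (n + 1) → M)) →+
      TensorProduct ℤ (CgpG (G := G) (M := M) (n + 1)) A :=
  FreeAbelianGroup.lift fun x =>
    (QuotientAddGroup.mk' (coinvSub (G := G) (M := M) (n + 1)) (psiVal φ n x)) ⊗ₜ[ℤ]
      lam (x.1 0)

/-- `D^{gp}_n(M;ℤ)_G`: the image in the coinvariants of the subgroup generated by tuples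
with a vanishing entry in a position `1 ≤ i ≤ n−1`. -/
def DgpGsub (n : ℕ) : AddSubgroup (CgpG (G := G) (M := M) n) :=
  (AddSubgroup.closure
      {z : FreeAbelianGroup (Fin n → M) |
        ∃ (m : Fin n → M) (i : Fin n),
          (i : ℕ) + 1 < n ∧ m i = 0 ∧ z = FreeAbelianGroup.of m}).map
    (QuotientAddGroup.mk' (coinvSub (G := G) (M := M) n))

/-! Words for the multiple conjugation biquandle complex `P_*(X;ℤ)`.
A block `⟨(m,g₁),(m,g₂),…,(m,g_s)⟩` lying in the group component `{m} × G` is encoded as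
`(m, g₁, [g₂,…,g_s]) : M × G × List G` (so blocks are automatically nonempty),
and a word is a list of blocks. -/

/-- The total length `n₁ + ⋯ + n_k` of a word. -/
def lenW (w : List (M × G × List G)) : ℕ := (w.map fun b => b.2.2.length + 1).sum

/-- Apply `⊳ x` entrywise to a block. -/
def underB (b : M × G × List G) (x : M × G) : M × G × List G :=
  (ract b.1 x.2 + ract x.1 (φ x.2) - ract x.1 x.2, x.2⁻¹ * b.2.1 * x.2,
    b.2.2.map fun g => x.2⁻¹ * g * x.2)

/-- Apply `⊚ x` entrywise to a block. -/
def overB (b : M × G × List G) (x : M × G) : M × G × List G :=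
  (ract b.1 (φ x.2), b.2.1, b.2.2)

/-- The block `⟨x₁⁻¹x₂ ⊚ x₁, …, x₁⁻¹x_s ⊚ x₁⟩` (deleted if `s = 1`). -/
def tildeB (b : M × G × List G) : List (M × G × List G) :=
  match b with
  | (_, _, []) => []
  | (m, h, g₂ :: rest) => [(ract m (φ h), h⁻¹ * g₂, rest.map fun g => h⁻¹ * g)]

/-- Make a (possibly deleted) block in the component `{m} × G` out of a list of `G`-entries. -/
def blockOfList (m : M) : List G → List (M × G × List G)
  | [] => []
  | g :: gs => [(m, g, gs)]

/-- The value of the boundary map `∂` of `P_*(X;ℤ)` on a word. -/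
def dPval (w : List (M × G × List G)) : FreeAbelianGroup (List (M × G × List G)) :=
  ∑ i ∈ (Finset.range w.length).attach,
    (fun b =>
      (-1 : ℤ) ^ lenW (w.take (i : ℕ)) •
        (FreeAbelianGroup.of
            ((w.take (i : ℕ)).map (fun c => underB φ c (b.1, b.2.1)) ++ tildeB φ b ++
              (w.drop ((i : ℕ) + 1)).map fun c => overB φ c (b.1, b.2.1)) +
          ∑ j ∈ Finset.range (b.2.2.length + 1),
            (-1 : ℤ) ^ (j + 1) •
              FreeAbelianGroup.of
                (w.take (i : ℕ) ++ blockOfList b.1 ((b.2.1 :: b.2.2).eraseIdx j) ++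
                  w.drop ((i : ℕ) + 1))))
      (w[(i : ℕ)]'(Finset.mem_range.mp i.2))

/-- The boundary map `∂` of the complex `P_*(X;ℤ)` (all degrees at once). -/
def dP : FreeAbelianGroup (List (M × G × List G)) →+
    FreeAbelianGroup (List (M × G × List G)) :=
  FreeAbelianGroup.lift (dPval φ)

/-- `⌊j;μ⌋`, where the strictly increasing map `μ` is encoded by the subset `T` of positions
taken from the first block: the number of elements of `T` that are `≤ j`. -/
def cntT {N : ℕ} (T : Finset (Fin N)) (j : ℕ) : ℕ := (T.filter fun p : Fin N => (p : ℕ) ≤ j).card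

/-- `1`-based lookup in a list of group elements, with `a₀ = 1`. -/
def idxL (l : List G) (i : ℕ) : G := if i = 0 then 1 else l.getD (i - 1) 1

/-- The entry `a_{⌊j;μ⌋} b_{j−⌊j;μ⌋}` (at `0`-based position `j`) of `⟨⟨a⟩⟨b⟩⟩_μ`. -/
def mergeEntry (la lb : List G) (T : Finset (Fin (la.length + lb.length))) (j : ℕ) : G :=
  idxL la (cntT T j) * idxL lb (j + 1 - cntT T j)

/-- The element `⟨x₁⟩⋯⟨⟨a⟩⟨b⟩⟩⋯⟨x_k⟩ = Σ_μ (−1)^{Σ(μ(k)−k)} ⟨…⟩`, where the two merged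
blocks lie in the component `{m} × G`, `w₁` is the prefix and `w₂` the suffix of the word. -/
def mergeExpand (m : M) (la lb : List G) (w₁ w₂ : List (M × G × List G)) :
    FreeAbelianGroup (List (M × G × List G)) :=
  ∑ T ∈ Finset.univ.filter
      fun T : Finset (Fin (la.length + lb.length)) => T.card = la.length,
    (-1 : ℤ) ^ ((∑ p ∈ T, (p : ℕ)) + ∑ kk ∈ Finset.range la.length, kk) •
      FreeAbelianGroup.of
        (w₁ ++ (m, mergeEntry la lb T 0,
            (List.range (la.length + lb.length - 1)).map
              fun j => mergeEntry la lb T (j + 1)) :: w₂)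

/-- `D_n(X;ℤ)`: the subgroup of `P_n(X;ℤ)` generated by
`⟨x₁⟩⋯⟨a⟩⟨b⟩⋯⟨x_k⟩ − ⟨x₁⟩⋯⟨⟨a⟩⟨b⟩⟩⋯⟨x_k⟩` for consecutive blocks in a common component. -/
def Dsub (n : ℕ) : AddSubgroup (FreeAbelianGroup (List (M × G × List G))) :=
  AddSubgroup.closure
    {z | ∃ (w₁ w₂ : List (M × G × List G)) (m : M) (g : G) (gs : List G) (h : G) (hs : List G),
      lenW (w₁ ++ (m, g, gs) :: (m, h, hs) :: w₂) = n ∧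
      z = FreeAbelianGroup.of (w₁ ++ (m, g, gs) :: (m, h, hs) :: w₂) -
          mergeExpand m (g :: gs) (h :: hs) w₁ w₂}

/-- `P_n(X;ℤ)` as the subgroup generated by the words of total length `n`. -/
def Psub (n : ℕ) : AddSubgroup (FreeAbelianGroup (List (M × G × List G))) :=
  AddSubgroup.closure
    {z | ∃ w : List (M × G × List G), lenW w = n ∧ z = FreeAbelianGroup.of w}

/-- `proj_n`, sending a word all of whose blocks are singletons (necessarily `n` of them)
to the corresponding `n`-tuple, and every other word to `0`. -/
def projP (n : ℕ) :
    FreeAbelianGroup (List (M × G × List G)) →+ FreeAbelianGroup (Fin n → M × G) :=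
  FreeAbelianGroup.lift fun w =>
    if h : w.length = n ∧ ∀ b ∈ w, b.2.2.isEmpty = true then
      FreeAbelianGroup.of fun i : Fin n =>
        ((w[(i : ℕ)]'(h.1.symm ▸ i.2)).1, (w[(i : ℕ)]'(h.1.symm ▸ i.2)).2.1)
    else 0

/-! The `X`-set versions of the word complex: a generator of `P_n(X;ℤ)_X` is a pair
`(x₀, w)` of an element `x₀ ∈ X` and a word `w` of total length `n`. -/

/-- The value of the boundary map `∂` of `P_*(X;ℤ)_X` on a generator `(x₀, w)`. -/
def dPXval (z : (M × G) × List (M × G × List G)) :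
    FreeAbelianGroup ((M × G) × List (M × G × List G)) :=
  ∑ i ∈ (Finset.range z.2.length).attach,
    (fun b =>
      (-1 : ℤ) ^ lenW (z.2.take (i : ℕ)) •
        (FreeAbelianGroup.of
            (under φ z.1 (b.1, b.2.1),
              (z.2.take (i : ℕ)).map (fun c => underB φ c (b.1, b.2.1)) ++ tildeB φ b ++
                (z.2.drop ((i : ℕ) + 1)).map fun c => overB φ c (b.1, b.2.1)) +
          ∑ j ∈ Finset.range (b.2.2.length + 1),
            (-1 : ℤ) ^ (j + 1) •
              FreeAbelianGroup.of
                (z.1, z.2.take (i : ℕ) ++ blockOfList b.1 ((b.2.1 :: b.2.2).eraseIdx j) ++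
                  z.2.drop ((i : ℕ) + 1))))
      (z.2[(i : ℕ)]'(Finset.mem_range.mp i.2))

/-- The boundary map `∂` of `P_*(X;ℤ)_X` (all degrees at once). -/
def dPX : FreeAbelianGroup ((M × G) × List (M × G × List G)) →+
    FreeAbelianGroup ((M × G) × List (M × G × List G)) :=
  FreeAbelianGroup.lift (dPXval φ)

/-- The element `⟨x₀⟩⟨x₁⟩⋯⟨⟨a⟩⟨b⟩⟩⋯⟨x_k⟩` in the `X`-set word complex. -/
def mergeExpandX (x₀ : M × G) (m : M) (la lb : List G) (w₁ w₂ : List (M × G × List G)) :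
    FreeAbelianGroup ((M × G) × List (M × G × List G)) :=
  ∑ T ∈ Finset.univ.filter
      fun T : Finset (Fin (la.length + lb.length)) => T.card = la.length,
    (-1 : ℤ) ^ ((∑ p ∈ T, (p : ℕ)) + ∑ kk ∈ Finset.range la.length, kk) •
      FreeAbelianGroup.of
        (x₀, w₁ ++ (m, mergeEntry la lb T 0,
            (List.range (la.length + lb.length - 1)).map
              fun j => mergeEntry la lb T (j + 1)) :: w₂)

/-- `D_n(X;ℤ)_X`. -/
def DsubX (n : ℕ) : AddSubgroup (FreeAbelianGroup ((M × G) × List (M × G × List G))) :=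
  AddSubgroup.closure
    {z | ∃ (x₀ : M × G) (w₁ w₂ : List (M × G × List G)) (m : M) (g : G) (gs : List G)
        (h : G) (hs : List G),
      lenW (w₁ ++ (m, g, gs) :: (m, h, hs) :: w₂) = n ∧
      z = FreeAbelianGroup.of (x₀, w₁ ++ (m, g, gs) :: (m, h, hs) :: w₂) -
          mergeExpandX x₀ m (g :: gs) (h :: hs) w₁ w₂}

/-- `P_n(X;ℤ)_X` as the subgroup generated by the generators of total length `n`. -/
def PsubX (n : ℕ) : AddSubgroup (FreeAbelianGroup ((M × G) × List (M × G × List G))) :=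
  AddSubgroup.closure
    {z | ∃ p : (M × G) × List (M × G × List G), lenW p.2 = n ∧ z = FreeAbelianGroup.of p}

/-- `proj_n` for the `X`-set word complex: `⟨x₀⟩⟨x₁⟩⋯⟨x_n⟩ ↦ (x₀, x₁, …, x_n)` on generators
all of whose blocks are singletons, `0` otherwise. -/
def projX (n : ℕ) :
    FreeAbelianGroup ((M × G) × List (M × G × List G)) →+
      FreeAbelianGroup (Fin (n + 1) → M × G) :=
  FreeAbelianGroup.lift fun z =>
    if h : z.2.length = n ∧ ∀ b ∈ z.2, b.2.2.isEmpty = true then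
      FreeAbelianGroup.of
        (Fin.cons z.1 fun i : Fin n =>
          ((z.2[(i : ℕ)]'(h.1.symm ▸ i.2)).1, (z.2[(i : ℕ)]'(h.1.symm ▸ i.2)).2.1))
    else 0

/-- `Φ_f = f ∘ ψ_n ∘ γ_n ∘ proj_n : P_n(X;ℤ)_X → A` (the Lean parameter `n` corresponds to
the paper's degree `n+1 ≥ 1`). -/
def PhiFX (n : ℕ) (f : CgpG (G := G) (M := M) (n + 2) →+ A) :
    FreeAbelianGroup ((M × G) × List (M × G × List G)) →+ A :=
  (f.comp (psiG φ (n + 1))).comp ((gammaMap (n + 2)).comp (projX (n + 1)))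

/-- `Φ_{f,λ} = (f ⊗ id_A) ∘ ψ_{n,λ} ∘ γ_n ∘ proj_n : P_n(X;ℤ)_X → A ⊗_ℤ A`. -/
noncomputable def PhiFLamX (lam : G → A) (n : ℕ)
    (f : CgpG (G := G) (M := M) (n + 2) →+ A) :
    FreeAbelianGroup ((M × G) × List (M × G × List G)) →+ TensorProduct ℤ A A :=
  ((TensorProduct.map f.toIntLinearMap (LinearMap.id : A →ₗ[ℤ] A)).toAddMonoidHom.comp
      (psiLam φ lam (n + 1))).comp ((gammaMap (n + 2)).comp (projX (n + 1)))

/-! Since `φ` is central, `θ g = g · φ(g)⁻¹` is a homomorphism.  Up to multiplication by `φ(h)`,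
which group coinvariants do not see, `⊚ (n, h)` is the identity and `⊳ (n, h)` moves the point `m`
to `(m - n) θ(h) + n`: the biquandle is replaced by an Alexander quandle acting on `M` by affine
maps.

In homogeneous coordinates, with `0` as the last vertex, `ψ ∘ γ` sends `(x₀, …, x_n)` to a cube of
simplices with vertices over `m₀, …, m_n`, in which `k_i = 1` means that `x_i` acts on all the
vertices before it.  Deleting the vertex over `x_i`, for `i ≥ 1`, leaves the difference of the two
rack faces of the cube.  Deleting the vertex over `x₀` gives `0`, because `x₁` then acts on nothing;
so does deleting the base point `0`, because `x_n` fixes its own vertex, so that it acts on the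
whole remaining simplex.  Hence a group cocycle becomes a rack cocycle.  It vanishes on two
consecutive entries over the same point of `M` by normalization, and on the boundary of a block
`⟨x, y⟩` because acting by `x` and then by `x⁻¹y` is acting by `y`. -/

section CubeChain

variable {X V B : Type*} [AddCommGroup B] (act : X → V → V) (pos : X → V) (op : X → X → X)

/-- The cube of simplices spanned by the cells `x ∈ L` on top of the vertex list `D`: each cell
contributes the vertex `pos x` and, with sign `-1`, the same simplex with `act x` applied to all the
vertices before it.  A list `V` of vertices stands for a homogeneous simplex, and deleting an entry
is taking a simplicial face. -/
def cubeChain : List V → List X → FreeAbelianGroup (List V)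
  | D, [] => of D
  | D, x :: L => cubeChain (D ++ [pos x]) L - cubeChain (D.map (act x) ++ [pos x]) L

theorem map_eraseIdx_cubeChain_of_lt (L : List X) :
    ∀ (D : List V) (p : ℕ), p < D.length →
      FreeAbelianGroup.map (List.eraseIdx · p) (cubeChain act pos D L) =
        cubeChain act pos (D.eraseIdx p) L := by
  induction L with
  | nil => intro D p _; simp only [cubeChain, FreeAbelianGroup.map_of_apply]
  | cons x L ih =>
    intro D p hp
    simp only [cubeChain, map_sub]
    rw [ih _ _ (by simp; omega), ih _ _ (by simp; omega),
      List.eraseIdx_append_of_lt_length hp,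
      List.eraseIdx_append_of_lt_length (by simpa using hp), List.eraseIdx_map]

theorem map_eraseIdx_zero_cubeChain (x : X) (L : List X) (v : V) :
    FreeAbelianGroup.map (List.eraseIdx · 0) (cubeChain act pos [v] (x :: L)) = 0 := by
  simp only [cubeChain, map_sub, List.map_cons, List.map_nil, List.cons_append, List.nil_append]
  rw [map_eraseIdx_cubeChain_of_lt _ _ _ _ _ (by simp),
    map_eraseIdx_cubeChain_of_lt _ _ _ _ _ (by simp)]
  exact sub_self _

variable {act pos op}

theorem map_eraseIdx_cubeChain
    (hact : ∀ x y v, act x (act y v) = act (op x y) (act x v))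
    (hpos : ∀ x y, act x (pos y) = pos (op x y)) (L₁ : List X) (x : X) (L₂ : List X) :
    ∀ D : List V,
      FreeAbelianGroup.map (List.eraseIdx · (D.length + L₁.length))
          (cubeChain act pos D (L₁ ++ x :: L₂)) =
        cubeChain act pos D (L₁ ++ L₂) -
          cubeChain act pos (D.map (act x)) (L₁.map (op x) ++ L₂) := by
  induction L₁ with
  | nil =>
    intro D
    simp only [List.nil_append, cubeChain, map_sub, List.map_nil, List.length_nil, add_zero]
    rw [map_eraseIdx_cubeChain_of_lt _ _ _ _ _ (by simp),
      map_eraseIdx_cubeChain_of_lt _ _ _ _ _ (by simp),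
      List.eraseIdx_append_of_length_le le_rfl,
      List.eraseIdx_append_of_length_le (by simp)]
    simp
  | cons y L₁ ih =>
    intro D
    have hD := ih (D ++ [pos y])
    have hyD := ih (D.map (act y) ++ [pos y])
    simp only [List.length_append, List.length_map, List.length_singleton, List.map_append,
      List.map_map, List.map_cons, List.map_nil, hpos, Function.comp_def, hact x y] at hD hyD
    simp only [List.cons_append, cubeChain, map_sub, List.map_cons, List.length_cons, List.map_map,
      Function.comp_def, ← add_assoc, add_right_comm _ L₁.length 1, hD, hyD]
    abel

theorem cubeChain_add_cubeChain_of_comp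
    (hact : ∀ x y v, act x (act y v) = act (op x y) (act x v))
    (hpos : ∀ x y, act x (pos y) = pos (op x y)) {x y z : X}
    (hcomp : ∀ v, act z (act x v) = act y v) (hx : pos x = pos y) (hz : pos z = pos y)
    (L₁ L₂ : List X) :
    ∀ D : List V,
      cubeChain act pos D (L₁ ++ x :: L₂) +
          cubeChain act pos (D.map (act x)) (L₁.map (op x) ++ z :: L₂) =
        cubeChain act pos D (L₁ ++ y :: L₂) := by
  induction L₁ with
  | nil => intro D; simp [cubeChain, hcomp, hx, hz, Function.comp_def]
  | cons w L₁ ih =>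
    intro D
    have hD := ih (D ++ [pos w])
    have hwD := ih (D.map (act w) ++ [pos w])
    simp only [List.map_append, List.map_map, List.map_cons, List.map_nil, hpos,
      Function.comp_def, hact x w] at hD hwD
    simp only [List.cons_append, cubeChain, List.map_cons, List.map_map, Function.comp_def,
      ← hD, ← hwD]
    abel

theorem cubeChain_map {X' V' : Type*} {act' : X' → V' → V'} {pos' : X' → V'} {σ : X → X'}
    {τ : V → V'} (hact : ∀ x v, act' (σ x) (τ v) = τ (act x v)) (hpos : ∀ x, pos' (σ x) = τ (pos x))
    (L : List X) :
    ∀ D : List V,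
      cubeChain act' pos' (D.map τ) (L.map σ) =
        FreeAbelianGroup.map (List.map τ) (cubeChain act pos D L) := by
  induction L with
  | nil => intro D; simp only [cubeChain, List.map_nil, FreeAbelianGroup.map_of_apply]
  | cons x L ih =>
    intro D
    simp only [cubeChain, List.map_cons, map_sub, ← ih, List.map_append, List.map_map, List.map_nil,
      hpos, Function.comp_def, hact]

theorem lift_cubeChain_append_singleton (hfix : ∀ x, act x (pos x) = pos x) {F : List V → B}
    {N : ℕ} (hF : ∀ x V, V.length = N → F (V.map (act x)) = F V) (L : List X) (x : X) :
    ∀ D : List V, D.length + L.length + 1 = N →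
      FreeAbelianGroup.lift F (cubeChain act pos D (L ++ [x])) = 0 := by
  induction L with
  | nil =>
    intro D hD
    have h := hF x (D ++ [pos x]) (by simpa using hD)
    simp only [List.map_append, List.map_cons, List.map_nil, hfix] at h
    simp [cubeChain, h]
  | cons y L ih =>
    intro D hD
    simp only [List.length_cons] at hD
    simp only [List.cons_append, cubeChain, map_sub]
    rw [ih _ (by simp; omega), ih _ (by simp; omega), sub_zero]

theorem lift_cubeChain_eq_zero_of_not_isChain (hfix : ∀ x, act x (pos x) = pos x) {F : List V → B}
    {N : ℕ} (hF : ∀ V : List V, V.length = N → ¬V.IsChain (· ≠ ·) → F V = 0) (L : List X) :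
    ∀ D : List V, D.length + L.length = N → ¬(D ++ L.map pos).IsChain (· ≠ ·) →
      FreeAbelianGroup.lift F (cubeChain act pos D L) = 0 := by
  induction L with
  | nil =>
    intro D hN hD
    simpa [cubeChain] using hF D (by simpa using hN) (by simpa using hD)
  | cons x L ih =>
    intro D hN hD
    have hacted : ¬((D.map (act x) ++ [pos x]) ++ L.map pos).IsChain (· ≠ ·) := by
      refine mt (fun h => ?_) hD
      rw [List.append_assoc, List.singleton_append, List.isChain_split] at h
      rw [List.map_cons, List.isChain_split]
      have hmap : D.map (act x) ++ [pos x] = (D ++ [pos x]).map (act x) := by simp [hfix]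
      rw [hmap, List.isChain_map] at h
      exact ⟨h.1.imp fun _ _ => mt (congrArg (act x)), h.2⟩
    simp only [List.length_cons] at hN
    simp only [cubeChain, map_sub]
    rw [ih _ (by simp; omega) (by simpa using hD), ih _ (by simp; omega) hacted, sub_zero]

end CubeChain

section AlexanderQuandle

@[simp]
theorem ract_ract (m : M) (g h : G) : ract (ract m g) h = ract m (g * h) := by
  simp only [ract, smul_smul, MulOpposite.op_mul]

@[simp]
theorem ract_one (m : M) : ract m (1 : G) = m := by
  simp only [ract, MulOpposite.op_one, one_smul]

@[simp]
theorem ract_zero (g : G) : ract (0 : M) g = 0 :=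
  smul_zero _

theorem ract_add (m n : M) (g : G) : ract (m + n) g = ract m g + ract n g :=
  smul_add _ _ _

theorem ract_sub (m n : M) (g : G) : ract (m - n) g = ract m g - ract n g :=
  smul_sub _ _ _

/-- The action `v ↦ (v - m) · θ(g) + m` of `(m, g)` on `M`: the twist by `θ(g)` about the point
`m`. -/
def twistAct (θ : G →* G) (x : M × G) (v : M) : M := ract (v - x.1) (θ x.2) + x.1

/-- The operation `y ↦ y ◁ x` of the Alexander quandle of `θ` on `M × G`, with the acting element
as first argument. -/
def twistOp (θ : G →* G) (x y : M × G) : M × G := (twistAct θ x y.1, x.2⁻¹ * y.2 * x.2)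

/-- The right action of `c : G` on the `M`-component of `x`: the operation `⊚` acts by such maps. -/
def scale (c : G) (x : M × G) : M × G := (ract x.1 c, x.2)

theorem twistAct_fst (θ : G →* G) (x : M × G) : twistAct θ x x.1 = x.1 := by
  simp [twistAct]

theorem twistAct_sub_twistAct (θ : G →* G) (x : M × G) (v w : M) :
    twistAct θ x v - twistAct θ x w = ract (v - w) (θ x.2) := by
  simp only [twistAct, ract_sub]
  abel

theorem twistAct_twistAct (θ : G →* G) (x y : M × G) (v : M) :
    twistAct θ x (twistAct θ y v) = twistAct θ (twistOp θ x y) (twistAct θ x v) := by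
  rw [eq_comm, twistAct, show (twistOp θ x y).1 = twistAct θ x y.1 from rfl,
    twistAct_sub_twistAct, ract_ract]
  simp only [twistOp, map_mul, map_inv, mul_assoc, mul_inv_cancel_left]
  rw [← ract_ract, ← eq_sub_iff_add_eq, twistAct_sub_twistAct, twistAct, add_sub_cancel_right]

theorem twistAct_comp (θ : G →* G) (m v : M) (g h : G) :
    twistAct θ (m, g⁻¹ * h) (twistAct θ (m, g) v) = twistAct θ (m, h) v := by
  simp only [twistAct, add_sub_cancel_right, ract_ract, ← map_mul, mul_inv_cancel_left]

theorem twistAct_scale (θ : G →* G) {c : G} (hc : c ∈ Subgroup.center G) (x : M × G) (v : M) :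
    twistAct θ (scale c x) (ract v c) = ract (twistAct θ x v) c := by
  simp only [twistAct, scale, ract_add, ← ract_sub, ract_ract, Subgroup.mem_center_iff.mp hc]

variable {φ}

/-- The homomorphism `g ↦ g · φ(g)⁻¹`.  It absorbs the second operation of the biquandle: `⊳` is the
quandle operation of this twist followed by multiplication of the `M`-component by `φ(g)`, and `⊚`
is that multiplication alone. -/
def twist (hφ : ∀ g : G, φ g ∈ Subgroup.center G) : G →* G where
  toFun g := g * (φ g)⁻¹
  map_one' := by simp
  map_mul' g h := by
    have hc := Subgroup.mem_center_iff.mp ((Subgroup.center G).inv_mem (hφ g)) (h * (φ h)⁻¹)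
    simp only [map_mul, mul_inv_rev, mul_assoc] at hc ⊢
    rw [hc]

theorem twist_apply (hφ : ∀ g : G, φ g ∈ Subgroup.center G) (g : G) :
    twist hφ g = g * (φ g)⁻¹ := rfl

theorem under_eq_scale_twistOp (hφ : ∀ g : G, φ g ∈ Subgroup.center G) (x y : M × G) :
    under φ x y = scale (φ y.2) (twistOp (twist hφ) y x) := by
  simp only [under, scale, twistOp, twistAct, ract_add, ract_sub, ract_ract, twist_apply,
    inv_mul_cancel_right]
  congr 1
  abel

end AlexanderQuandle

section Cochains

/-- A cochain evaluated on the inhomogeneous simplex with the given list of entries, padded by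
zeros. -/
def barCochain {N : ℕ} (f : CgpG (G := G) (M := M) N →+ A) (X : List M) : A :=
  f (QuotientAddGroup.mk' _ (of fun i : Fin N => X.getD i 0))

/-- The successive differences `v₀ - v₁, …, v_{n-1} - v_n, v_n - e` of a list of vertices followed
by `e`. -/
def steps (e : M) : List M → List M
  | [] => []
  | v :: V => (v - V.headD e) :: steps e V

/-- The homogeneous form of a cochain: the vertices of the simplex are `V` and the base point `0`,
its entries their differences.  Only the first `N` of them are read. -/
def simplexCochain {N : ℕ} (f : CgpG (G := G) (M := M) N →+ A) (V : List M) : A :=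
  barCochain f (steps 0 V)

theorem steps_append_singleton (e p : M) (D : List M) :
    steps e (D ++ [p]) = steps p D ++ [p - e] := by
  induction D with
  | nil => rfl
  | cons v D ih => cases D <;> simp_all [steps]

theorem steps_map {τ ρ : M → M} (h : ∀ v w, τ v - τ w = ρ (v - w)) (e : M) (V : List M) :
    steps (τ e) (V.map τ) = (steps e V).map ρ := by
  induction V with
  | nil => rfl
  | cons v V ih => cases V <;> simp_all [steps]

theorem getD_steps (e : M) (V : List M) (i : ℕ) :
    (steps e V).getD i 0 = V.getD i e - V.getD (i + 1) e := by
  induction V generalizing i with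
  | nil => simp [steps]
  | cons v V ih =>
    cases i with
    | zero => cases V <;> simp [steps]
    | succ i => simpa [steps] using ih i

theorem getD_steps_ofFn {n : ℕ} (v : Fin n → M) (j : Fin n) :
    (steps 0 (List.ofFn v)).getD j 0 =
      v j - if h : (j : ℕ) + 1 < n then v ⟨(j : ℕ) + 1, h⟩ else 0 := by
  rw [getD_steps]
  simp only [List.getD_eq_getElem?_getD, List.getElem?_ofFn, j.2, dite_true, Option.getD_some]
  split_ifs <;> rfl

theorem simplexCochain_apply {N : ℕ} (f : CgpG (G := G) (M := M) N →+ A) (V : List M) :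
    simplexCochain f V =
      f (QuotientAddGroup.mk' _ (of fun i : Fin N => V.getD i 0 - V.getD (i + 1) 0)) := by
  simp only [simplexCochain, barCochain, getD_steps]

variable {N : ℕ} {f : CgpG (G := G) (M := M) N →+ A}

theorem mk'_of_ract (g : G) (m : Fin N → M) :
    QuotientAddGroup.mk' (coinvSub (G := G) N) (of fun i => ract (m i) g) =
      QuotientAddGroup.mk' (coinvSub (G := G) N) (of m) := by
  rw [← sub_eq_zero, ← map_sub, QuotientAddGroup.mk'_apply, QuotientAddGroup.eq_zero_iff]
  exact AddSubgroup.subset_closure ⟨m, g, rfl⟩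

theorem barCochain_map_ract (g : G) (X : List M) :
    barCochain f (X.map (ract · g)) = barCochain f X := by
  rw [barCochain, barCochain, ← mk'_of_ract g fun i : Fin N => X.getD i 0]
  congr! 4 with i
  conv_lhs => rw [← ract_zero g]
  exact List.getD_map ..

theorem simplexCochain_map_ract (g : G) (V : List M) :
    simplexCochain f (V.map (ract · g)) = simplexCochain f V := by
  have hsteps : steps 0 (V.map (ract · g)) = (steps 0 V).map (ract · g) := by
    simpa only [ract_zero] using
      steps_map (τ := (ract · g)) (ρ := (ract · g)) (fun v w => (ract_sub v w g).symm) 0 V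
  rw [simplexCochain, hsteps, barCochain_map_ract, simplexCochain]

theorem simplexCochain_map_twistAct (θ : G →* G) (x : M × G) {V : List M} (hV : N < V.length) :
    simplexCochain f (V.map (twistAct θ x)) = simplexCochain f V := by
  rw [simplexCochain_apply, simplexCochain_apply,
    ← mk'_of_ract (θ x.2) fun i : Fin N => V.getD i 0 - V.getD (i + 1) 0]
  congr! 4 with i
  have hi := i.2
  simp only [List.getD_eq_getElem?_getD, List.getElem?_map, List.getElem?_eq_getElem (hi.trans hV),
    List.getElem?_eq_getElem (show (i : ℕ) + 1 < V.length by omega), Option.map_some,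
    Option.getD_some, twistAct_sub_twistAct]

theorem simplexCochain_eq_zero_of_not_isChain
    (hnorm : ∀ z ∈ DgpGsub (G := G) (M := M) N, f z = 0) {V : List M} (hV : V.length = N)
    (hdeg : ¬V.IsChain (· ≠ ·)) : simplexCochain f V = 0 := by
  simp only [List.isChain_iff_getElem, not_forall, not_not] at hdeg
  obtain ⟨i, hi, hVi⟩ := hdeg
  rw [simplexCochain_apply]
  refine hnorm _ ⟨_, AddSubgroup.subset_closure
    ⟨_, ⟨i, by omega⟩, by simpa [hV] using hi, ?_, rfl⟩, rfl⟩
  simp [List.getD_eq_getElem?_getD, hi, hVi, Nat.lt_of_succ_lt hi]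

theorem dMmer_sub (V : List M) (p : Fin (N + 1)) (j : Fin N) :
    dMmer N p (fun i => V.getD i 0 - V.getD (i + 1) 0) j =
      (V.eraseIdx p).getD j 0 - (V.eraseIdx p).getD (j + 1) 0 := by
  simp only [dMmer, List.getD_eq_getElem?_getD, List.getElem?_eraseIdx, Fin.val_castSucc,
    Fin.val_succ]
  split_ifs <;> first | omega | simp

theorem sum_simplexCochain_eraseIdx
    (hcocycle : f.comp ((QuotientAddGroup.mk' _).comp (dgp N)) = 0) (V : List M) :
    ∑ p ∈ Finset.range (N + 1), (-1 : ℤ) ^ p • simplexCochain f (V.eraseIdx p) =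
      (-1 : ℤ) ^ N • simplexCochain f V := by
  have h := DFunLike.congr_fun hcocycle
    (of fun i : Fin (N + 1) => V.getD i 0 - V.getD (i + 1) 0)
  simp only [AddMonoidHom.comp_apply, dgp, FreeAbelianGroup.lift_apply_of, map_add, map_sum,
    map_zsmul, AddMonoidHom.zero_apply, funext (dMmer_sub V _), ← simplexCochain_apply] at h
  rw [Finset.sum_range, ← sub_eq_zero, ← h, pow_succ]
  simp only [mul_neg, mul_one, neg_smul, sub_eq_add_neg, simplexCochain_apply, Fin.val_castSucc]

theorem sum_lift_simplexCochain_map_eraseIdx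
    (hcocycle : f.comp ((QuotientAddGroup.mk' _).comp (dgp N)) = 0)
    (c : FreeAbelianGroup (List M)) :
    ∑ p ∈ Finset.range (N + 1), (-1 : ℤ) ^ p •
        FreeAbelianGroup.lift (simplexCochain f) (FreeAbelianGroup.map (List.eraseIdx · p) c) =
      (-1 : ℤ) ^ N • FreeAbelianGroup.lift (simplexCochain f) c := by
  induction c using FreeAbelianGroup.induction_on with
  | zero => simp
  | of V => simpa using sum_simplexCochain_eraseIdx hcocycle V
  | neg V ih => simp only [map_neg, smul_neg, Finset.sum_neg_distrib, ih]
  | add c d hc hd => simp only [map_add, smul_add, Finset.sum_add_distrib, hc, hd]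

end Cochains

section CubeEval

variable {N : ℕ} (f : CgpG (G := G) (M := M) N →+ A) (θ : G →* G)

/-- The value of a cochain on the cube spanned by the quandle elements `L` on top of the base
vertex `v`. -/
def cubeEval (v : M) (L : List (M × G)) : A :=
  FreeAbelianGroup.lift (simplexCochain f) (cubeChain (twistAct θ) Prod.fst [v] L)

theorem cubeEval_scale {c : G} (hc : c ∈ Subgroup.center G) (v : M) (L : List (M × G)) :
    cubeEval f θ (ract v c) (L.map (scale c)) = cubeEval f θ v L := by
  have hscaled : cubeChain (twistAct θ) Prod.fst [ract v c] (L.map (scale c)) =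
      FreeAbelianGroup.map (List.map (ract · c)) (cubeChain (twistAct θ) Prod.fst [v] L) :=
    cubeChain_map (τ := (ract · c)) (twistAct_scale θ hc) (fun _ => rfl) L [v]
  rw [cubeEval, hscaled, ← FreeAbelianGroup.lift_comp, cubeEval]
  congr 2
  exact funext (simplexCochain_map_ract c)

theorem cubeEval_add_cubeEval_comp (v m : M) (g h : G) (L₁ L₂ : List (M × G)) :
    cubeEval f θ v (L₁ ++ (m, g) :: L₂) +
        cubeEval f θ (twistAct θ (m, g) v) (L₁.map (twistOp θ (m, g)) ++ (m, g⁻¹ * h) :: L₂) =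
      cubeEval f θ v (L₁ ++ (m, h) :: L₂) := by
  rw [cubeEval, cubeEval, cubeEval, ← map_add]
  exact congrArg _ (cubeChain_add_cubeChain_of_comp (twistAct_twistAct θ) (fun _ _ => rfl)
    (fun v => twistAct_comp θ m v g h) rfl rfl L₁ L₂ [v])

variable {f}

theorem cubeEval_eq_zero_of_not_isChain (hnorm : ∀ z ∈ DgpGsub (G := G) (M := M) N, f z = 0)
    {v : M} {L : List (M × G)} (hN : L.length + 1 = N)
    (hdeg : ¬(v :: L.map Prod.fst).IsChain (· ≠ ·)) : cubeEval f θ v L = 0 :=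
  lift_cubeChain_eq_zero_of_not_isChain (twistAct_fst θ)
    (fun _ => simplexCochain_eq_zero_of_not_isChain hnorm) L [v] (by simpa [add_comm] using hN) hdeg

theorem cubeEval_append_singleton (v : M) {L : List (M × G)} (x : M × G) (hL : L.length + 1 = N) :
    cubeEval f θ v (L ++ [x]) = 0 :=
  lift_cubeChain_append_singleton (twistAct_fst θ) (N := N + 1)
    (fun x _ hV => simplexCochain_map_twistAct θ x (by omega)) L x [v]
    (by rw [List.length_singleton]; omega)

theorem lift_simplexCochain_face (v : M) (L : List (M × G)) (p : Fin L.length) :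
    FreeAbelianGroup.lift (simplexCochain f) (FreeAbelianGroup.map (List.eraseIdx · (p + 1))
        (cubeChain (twistAct θ) Prod.fst [v] L)) =
      cubeEval f θ v (L.eraseIdx p) -
        cubeEval f θ (twistAct θ L[p] v) ((L.take p).map (twistOp θ L[p]) ++ L.drop (p + 1)) := by
  have hface := map_eraseIdx_cubeChain (pos := Prod.fst) (op := twistOp θ) (twistAct_twistAct θ)
    (fun _ _ => rfl) (L.take p) L[p] (L.drop (p + 1)) [v]
  rw [Fin.getElem_fin, List.getElem_cons_drop, List.take_append_drop, List.length_singleton,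
    List.length_take_of_le p.2.le, add_comm 1, ← List.eraseIdx_eq_take_drop_succ] at hface
  rw [hface, map_sub, cubeEval, cubeEval]
  rfl

theorem sum_cubeEval_faces
    (hcocycle : f.comp ((QuotientAddGroup.mk' _).comp (dgp N)) = 0) (v : M) {L : List (M × G)}
    (hL : L.length = N) :
    ∑ p : Fin L.length, (-1 : ℤ) ^ (p : ℕ) •
      (cubeEval f θ (twistAct θ L[p] v) ((L.take p).map (twistOp θ L[p]) ++ L.drop (p + 1)) -
        cubeEval f θ v (L.eraseIdx p)) = 0 := by
  rcases L with - | ⟨y, L⟩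
  · simp
  have hlast : cubeEval f θ v (y :: L) = 0 := by
    obtain ⟨L', x, hL'⟩ := List.eq_nil_or_concat (y :: L) |>.resolve_left (List.cons_ne_nil _ _)
    rw [hL', List.concat_eq_append]
    exact cubeEval_append_singleton θ v x (by simpa [hL'] using hL)
  subst hL
  have hsum := sum_lift_simplexCochain_map_eraseIdx hcocycle
    (cubeChain (twistAct θ) Prod.fst [v] (y :: L))
  rw [← cubeEval, hlast, smul_zero, Finset.sum_range_succ', map_eraseIdx_zero_cubeChain, map_zero,
    smul_zero, add_zero, Finset.sum_range] at hsum
  simpa only [lift_simplexCochain_face, pow_succ, mul_neg, mul_one, neg_smul, ← smul_neg,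
    neg_sub] using hsum

end CubeEval

section CubeFormula

variable {φ} {n : ℕ}

/-- The ordered product `g₀^{k₀} ⋯ g_{n-1}^{k_{n-1}}`. -/
def cornerProd (g : Fin n → G) (k : Fin n → Bool) : G :=
  ((List.finRange n).map fun j => if k j then g j else 1).prod

theorem cornerProd_cons (g : Fin (n + 1) → G) (b : Bool) (k : Fin n → Bool) :
    cornerProd g (Fin.cons b k : Fin (n + 1) → Bool) =
      (if b then g 0 else 1) * cornerProd (fun i => g i.succ) k := by
  simp [cornerProd, List.finRange_succ, Function.comp_def]

theorem gki_cons_zero (g : Fin (n + 1) → G) (b : Bool) (k : Fin n → Bool) :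
    gki φ g (Fin.cons b k : Fin (n + 1) → Bool) 0 =
      φ (if b then g 0 else 1) * cornerProd (fun i => g i.succ) k := by
  simp [gki, cornerProd, List.finRange_succ, Function.comp_def, List.filter_map]

theorem gki_cons_succ (g : Fin (n + 1) → G) (b : Bool) (k : Fin n → Bool) (i : Fin n) :
    gki φ g (Fin.cons b k : Fin (n + 1) → Bool) i.succ =
      φ (if b then g 0 else 1) * gki φ (fun i => g i.succ) k i := by
  cases b <;> simp [gki, List.finRange_succ, Function.comp_def, List.filter_map, mul_assoc]

theorem wt_cons (b : Bool) (k : Fin n → Bool) :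
    wt (Fin.cons b k : Fin (n + 1) → Bool) = (if b then 1 else 0) + wt k := by
  simp only [wt, Fin.sum_univ_succ, Fin.cons_zero, Fin.cons_succ]

theorem sum_fin_succ_bool (F : (Fin (n + 1) → Bool) → A) :
    ∑ k, F k =
      ∑ k : Fin n → Bool, F (Fin.cons false k) + ∑ k : Fin n → Bool, F (Fin.cons true k) := by
  rw [← (Fin.consEquiv fun _ : Fin (n + 1) => Bool).sum_comp, Fintype.sum_prod_type]
  simp [Fin.consEquiv, add_comm]

theorem lift_cubeChain_ofFn {N : ℕ} (f : CgpG (G := G) (M := M) N →+ A)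
    (hφ : ∀ g : G, φ g ∈ Subgroup.center G) (x : Fin n → M × G) (D : List M) :
    FreeAbelianGroup.lift (simplexCochain f)
        (cubeChain (twistAct (twist hφ)) Prod.fst D (List.ofFn x)) =
      ∑ k : Fin n → Bool, (-1 : ℤ) ^ wt k • barCochain f
        ((steps ((List.ofFn fun i => (x i).1).headD 0) D).map
            (ract · (cornerProd (fun i => (x i).2) k)) ++
          List.ofFn fun i => ract ((steps 0 (List.ofFn fun i => (x i).1)).getD i 0)
            (gki φ (fun i => (x i).2) k i)) := by
  induction n generalizing D with
  | zero => simp [cubeChain, simplexCochain, cornerProd, wt]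
  | succ n ih =>
    rw [List.ofFn_succ (f := x), cubeChain, map_sub, ih, ih, sum_fin_succ_bool, sub_eq_add_neg,
      ← Finset.sum_neg_distrib]
    have hsteps : steps (x 0).1 (D.map (twistAct (twist hφ) (x 0))) =
        (steps (x 0).1 D).map (ract · (twist hφ (x 0).2)) := by
      conv_lhs => rw [← twistAct_fst (twist hφ) (x 0)]
      exact steps_map (twistAct_sub_twistAct _ _) _ _
    have hcomm (a : G) : a * φ (x 0).2 = φ (x 0).2 * a := Subgroup.mem_center_iff.mp (hφ _) a
    have htwist (a : G) : φ (x 0).2 * (twist hφ (x 0).2 * a) = (x 0).2 * a := by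
      rw [← mul_assoc, ← hcomm, twist_apply, inv_mul_cancel_right]
    refine congrArg₂ (· + ·) (Finset.sum_congr rfl fun k _ => ?_)
      (Finset.sum_congr rfl fun k _ => ?_)
    · simp [wt_cons, cornerProd_cons, gki_cons_zero, gki_cons_succ, List.ofFn_succ, steps,
        steps_append_singleton]
    · rw [← barCochain_map_ract (φ (x 0).2)]
      simp [wt_cons, cornerProd_cons, gki_cons_zero, gki_cons_succ, List.ofFn_succ, steps,
        steps_append_singleton, hsteps, pow_add, hcomm, htwist, Function.comp_def]

theorem apply_psiG_gammaMap (f : CgpG (G := G) (M := M) (n + 1) →+ A)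
    (hφ : ∀ g : G, φ g ∈ Subgroup.center G) (z : Fin (n + 1) → M × G) :
    f (psiG φ n (gammaMap (n + 1) (of z))) =
      cubeEval f (twist hφ) (z 0).1 (List.ofFn fun i => z i.succ) := by
  simp only [psiG, psiFree, gammaMap, FreeAbelianGroup.lift_apply_of, AddMonoidHom.comp_apply]
  rw [psiVal, Finset.sum_filter, sum_fin_succ_bool, cubeEval, lift_cubeChain_ofFn]
  simp only [Fin.cons_zero, Bool.true_eq_false, if_false, Finset.sum_const_zero, add_zero,
    if_true, map_sum, map_zsmul]
  refine Finset.sum_congr rfl fun k _ => ?_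
  rw [wt_cons, barCochain, if_neg Bool.false_ne_true, zero_add]
  congr! 5 with i
  rw [← getD_steps_ofFn fun i => (z i).1, List.ofFn_succ]
  refine Fin.cases ?_ (fun j => ?_) i
  · simp [gki_cons_zero, steps]
  · simp [gki_cons_succ, steps]

end CubeFormula

section Words

variable {G M : Type*} {w₁ w₂ : List (M × G × List G)} {b : M × G × List G}

/-- A word is simple if all its blocks are singletons: these are the words on which `projX` does not
vanish. -/
def IsSimple (w : List (M × G × List G)) : Prop := ∀ b ∈ w, b.2.2 = []

/-- The leading entry of a block, as an element of `M × G`. -/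
def lead (b : M × G × List G) : M × G := (b.1, b.2.1)

theorem isSimple_append : IsSimple (w₁ ++ w₂) ↔ IsSimple w₁ ∧ IsSimple w₂ :=
  List.forall_mem_append

theorem isSimple_cons : IsSimple (b :: w₂) ↔ b.2.2 = [] ∧ IsSimple w₂ :=
  List.forall_mem_cons

theorem isSimple_map_iff {F : M × G × List G → M × G × List G}
    (hF : ∀ b, (F b).2.2 = [] ↔ b.2.2 = []) : IsSimple (w₁.map F) ↔ IsSimple w₁ := by
  simp only [IsSimple, List.forall_mem_map, hF]

theorem isSimple_blockOfList_iff {m : M} {l : List G} :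
    IsSimple (blockOfList m l) ↔ l.length ≤ 1 := by
  cases l <;> simp [blockOfList, IsSimple, List.length_eq_zero_iff]

theorem lenW_append (w₁ w₂ : List (M × G × List G)) : lenW (w₁ ++ w₂) = lenW w₁ + lenW w₂ := by
  simp [lenW]

theorem lenW_cons (b : M × G × List G) (w : List (M × G × List G)) :
    lenW (b :: w) = b.2.2.length + 1 + lenW w := by
  simp [lenW]

theorem IsSimple.lenW_eq_length {w : List (M × G × List G)} (hw : IsSimple w) :
    lenW w = w.length := by
  induction w with
  | nil => rfl
  | cons b w ih =>
    rw [isSimple_cons] at hw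
    rw [lenW_cons, ih hw.2, hw.1, List.length_nil, List.length_cons, zero_add, add_comm]

end Words

section Evaluation

variable {φ} {n : ℕ} {f : CgpG (G := G) (M := M) (n + 2) →+ A}

theorem isSimple_map_underB {w : List (M × G × List G)} {y : M × G} :
    IsSimple (w.map (underB φ · y)) ↔ IsSimple w :=
  isSimple_map_iff fun _ => List.map_eq_nil_iff

theorem isSimple_map_overB {w : List (M × G × List G)} {y : M × G} :
    IsSimple (w.map (overB φ · y)) ↔ IsSimple w :=
  isSimple_map_iff fun _ => Iff.rfl

theorem tildeB_eq_map_overB (b : M × G × List G) :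
    tildeB φ b =
      (blockOfList b.1 (b.2.2.map (b.2.1⁻¹ * ·))).map (overB φ · (lead b)) := by
  obtain ⟨m, g, - | ⟨h, hs⟩⟩ := b <;> rfl

theorem PhiFX_of_isSimple (hφ : ∀ g : G, φ g ∈ Subgroup.center G) (x : M × G)
    {w : List (M × G × List G)} (hlen : w.length = n + 1) (hw : IsSimple w) :
    PhiFX φ n f (of (x, w)) = cubeEval f (twist hφ) x.1 (w.map lead) := by
  have hproj : w.length = n + 1 ∧ ∀ b ∈ w, b.2.2.isEmpty = true :=
    ⟨hlen, fun b hb => List.isEmpty_iff.mpr (hw b hb)⟩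
  simp only [PhiFX, AddMonoidHom.comp_apply, projX, FreeAbelianGroup.lift_apply_of]
  rw [dif_pos hproj, apply_psiG_gammaMap f hφ]
  simp only [Fin.cons_zero, Fin.cons_succ]
  congr 1
  refine List.ext_getElem (by simp [hlen]) fun i _ _ => ?_
  rw [List.getElem_ofFn, List.getElem_map, lead]

theorem PhiFX_of_not_isSimple (x : M × G) {w : List (M × G × List G)} (hw : ¬IsSimple w) :
    PhiFX φ n f (of (x, w)) = 0 := by
  simp only [PhiFX, AddMonoidHom.comp_apply, projX, FreeAbelianGroup.lift_apply_of]
  rw [dif_neg fun h => hw fun b hb => List.isEmpty_iff.mp (h.2 b hb)]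
  simp only [map_zero]

theorem PhiFX_of_under (hφ : ∀ g : G, φ g ∈ Subgroup.center G) (x y : M × G)
    {w₁ w₂ : List (M × G × List G)} (hlen : (w₁ ++ w₂).length = n + 1)
    (hw : IsSimple (w₁ ++ w₂)) :
    PhiFX φ n f (of (under φ x y, w₁.map (underB φ · y) ++ w₂.map (overB φ · y))) =
      cubeEval f (twist hφ) (twistAct (twist hφ) y x.1)
        ((w₁.map lead).map (twistOp (twist hφ) y) ++ w₂.map lead) := by
  have hlead : (w₁.map (underB φ · y) ++ w₂.map (overB φ · y)).map lead =
      ((w₁.map lead).map (twistOp (twist hφ) y) ++ w₂.map lead).map (scale (φ y.2)) := by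
    simp only [List.map_append, List.map_map]
    congr 2
    exact funext fun c => under_eq_scale_twistOp hφ (lead c) y
  rw [PhiFX_of_isSimple hφ _ (by simpa using hlen), hlead, under_eq_scale_twistOp hφ]
  · exact cubeEval_scale f _ (hφ y.2) _ _
  · rwa [isSimple_append, isSimple_map_underB, isSimple_map_overB, ← isSimple_append]

theorem PhiFX_mergeExpandX (x : M × G) (m : M) (g h : G) (gs hs : List G)
    (w₁ w₂ : List (M × G × List G)) :
    PhiFX φ n f (mergeExpandX x m (g :: gs) (h :: hs) w₁ w₂) = 0 := by
  rw [mergeExpandX, map_sum]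
  refine Finset.sum_eq_zero fun T _ => ?_
  rw [map_zsmul, PhiFX_of_not_isSimple, smul_zero]
  simp [isSimple_append, isSimple_cons]

theorem PhiFX_of_consecutive (hφ : ∀ g : G, φ g ∈ Subgroup.center G)
    (hnorm : ∀ z ∈ DgpGsub (G := G) (M := M) (n + 2), f z = 0) (x : M × G)
    {w₁ w₂ : List (M × G × List G)} {m : M} {g h : G} {gs hs : List G}
    (hlen : lenW (w₁ ++ (m, g, gs) :: (m, h, hs) :: w₂) = n + 1) :
    PhiFX φ n f (of (x, w₁ ++ (m, g, gs) :: (m, h, hs) :: w₂)) = 0 := by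
  by_cases hw : IsSimple (w₁ ++ (m, g, gs) :: (m, h, hs) :: w₂)
  · rw [hw.lenW_eq_length] at hlen
    rw [PhiFX_of_isSimple hφ x hlen hw]
    refine cubeEval_eq_zero_of_not_isChain _ hnorm (by rw [List.length_map, hlen]) fun hchain => ?_
    rw [List.map_map, List.map_append, ← List.cons_append] at hchain
    exact (List.isChain_cons_cons.mp hchain.right_of_append).1 rfl
  · exact PhiFX_of_not_isSimple x hw

end Evaluation

section Boundary

variable {n : ℕ} {f : CgpG (G := G) (M := M) (n + 2) →+ A}

/-- The part of the boundary of the generator `(x, w₁ ++ b :: w₂)` coming from the block `b`, up to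
the sign `(-1) ^ lenW w₁`. -/
def boundaryTerm (x : M × G) (w₁ : List (M × G × List G)) (b : M × G × List G)
    (w₂ : List (M × G × List G)) : FreeAbelianGroup ((M × G) × List (M × G × List G)) :=
  of (under φ x (lead b),
      w₁.map (underB φ · (lead b)) ++ tildeB φ b ++ w₂.map (overB φ · (lead b))) +
    ∑ j ∈ Finset.range (b.2.2.length + 1), (-1 : ℤ) ^ (j + 1) •
      of (x, w₁ ++ blockOfList b.1 ((b.2.1 :: b.2.2).eraseIdx j) ++ w₂)

theorem dPXval_eq_sum_boundaryTerm (x : M × G) (w : List (M × G × List G)) :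
    dPXval φ (x, w) = ∑ p : Fin w.length,
      (-1 : ℤ) ^ lenW (w.take p) • boundaryTerm φ x (w.take p) w[p] (w.drop (p + 1)) := by
  let index : {i // i ∈ Finset.range w.length} ≃ Fin w.length :=
    ⟨fun i => ⟨i, Finset.mem_range.mp i.2⟩, fun p => ⟨p, Finset.mem_range.mpr p.2⟩,
      fun _ => rfl, fun _ => rfl⟩
  exact Fintype.sum_equiv index _ (fun p => (-1 : ℤ) ^ lenW (w.take p) •
    boundaryTerm φ x (w.take p) w[p] (w.drop (p + 1))) fun _ => rfl

variable {φ}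

theorem PhiFX_boundaryTerm_of_isSimple (hφ : ∀ g : G, φ g ∈ Subgroup.center G) (x : M × G)
    {w₁ w₂ : List (M × G × List G)} {b : M × G × List G} (hw : IsSimple (w₁ ++ b :: w₂))
    (hlen : (w₁ ++ b :: w₂).length = n + 2) :
    PhiFX φ n f (boundaryTerm φ x w₁ b w₂) =
      cubeEval f (twist hφ) (twistAct (twist hφ) (lead b) x.1)
          ((w₁.map lead).map (twistOp (twist hφ) (lead b)) ++ w₂.map lead) -
        cubeEval f (twist hφ) x.1 (w₁.map lead ++ w₂.map lead) := by
  obtain ⟨m, g, gs⟩ := b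
  obtain ⟨hw₁, rfl, hw₂⟩ : IsSimple w₁ ∧ gs = [] ∧ IsSimple w₂ := by
    simpa only [isSimple_append, isSimple_cons] using hw
  have hrest : IsSimple (w₁ ++ w₂) := isSimple_append.mpr ⟨hw₁, hw₂⟩
  have hrest_len : (w₁ ++ w₂).length = n + 1 := by
    simp only [List.length_append, List.length_cons] at hlen ⊢
    omega
  rw [← PhiFX_of_under hφ x _ hrest_len hrest, ← List.map_append,
    ← PhiFX_of_isSimple hφ x hrest_len hrest]
  simp [boundaryTerm, tildeB, blockOfList, sub_eq_add_neg]

theorem PhiFX_boundaryTerm_pair (hφ : ∀ g : G, φ g ∈ Subgroup.center G) (x : M × G)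
    {w₁ w₂ : List (M × G × List G)} (hw₁ : IsSimple w₁) (hw₂ : IsSimple w₂)
    (hlen : w₁.length + w₂.length = n) (m : M) (g h : G) :
    PhiFX φ n f (boundaryTerm φ x w₁ (m, g, [h]) w₂) = 0 := by
  have hsimple (k : G) : IsSimple (w₁ ++ (m, k, []) :: w₂) :=
    isSimple_append.mpr ⟨hw₁, isSimple_cons.mpr ⟨rfl, hw₂⟩⟩
  have hlength (k : G) : (w₁ ++ (m, k, []) :: w₂).length = n + 1 := by
    rw [List.length_append, List.length_cons, ← hlen, add_assoc]
  have hterm : boundaryTerm φ x w₁ (m, g, [h]) w₂ =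
      of (under φ x (m, g),
          w₁.map (underB φ · (m, g)) ++ ((m, g⁻¹ * h, []) :: w₂).map (overB φ · (m, g))) -
        of (x, w₁ ++ (m, h, []) :: w₂) + of (x, w₁ ++ (m, g, []) :: w₂) := by
    simp [boundaryTerm, tildeB_eq_map_overB, lead, blockOfList, Finset.sum_range_succ,
      sub_eq_add_neg, add_assoc]
  rw [hterm, map_add, map_sub, PhiFX_of_under hφ x _ (hlength _) (hsimple _),
    PhiFX_of_isSimple hφ x (hlength h) (hsimple h), PhiFX_of_isSimple hφ x (hlength g) (hsimple g)]
  simp only [List.map_append, List.map_cons, lead]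
  rw [← cubeEval_add_cubeEval_comp f (twist hφ) x.1 m g h]
  abel

theorem PhiFX_boundaryTerm_of_not_isSimple (hφ : ∀ g : G, φ g ∈ Subgroup.center G) (x : M × G)
    {w₁ w₂ : List (M × G × List G)} {b : M × G × List G} (hw : ¬IsSimple (w₁ ++ b :: w₂))
    (hlen : lenW (w₁ ++ b :: w₂) = n + 2) :
    PhiFX φ n f (boundaryTerm φ x w₁ b w₂) = 0 := by
  by_cases hpair : IsSimple w₁ ∧ IsSimple w₂ ∧ b.2.2.length = 1
  · obtain ⟨hw₁, hw₂, hb⟩ := hpair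
    obtain ⟨m, g, gs⟩ := b
    obtain ⟨h, rfl⟩ := List.length_eq_one_iff.mp hb
    rw [lenW_append, lenW_cons, hw₁.lenW_eq_length, hw₂.lenW_eq_length,
      List.length_singleton] at hlen
    exact PhiFX_boundaryTerm_pair hφ x hw₁ hw₂ (by omega) m g h
  · have hlong (h₁ : IsSimple w₁) (h₂ : IsSimple w₂) : 2 ≤ b.2.2.length := by
      rw [isSimple_append, isSimple_cons, ← List.length_eq_zero_iff] at hw
      have h0 : b.2.2.length ≠ 0 := fun h => hw ⟨h₁, h, h₂⟩
      have h1 : b.2.2.length ≠ 1 := fun h => hpair ⟨h₁, h₂, h⟩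
      omega
    rw [boundaryTerm, map_add, map_sum, PhiFX_of_not_isSimple, Finset.sum_eq_zero, add_zero]
    · intro j hj
      rw [map_zsmul, PhiFX_of_not_isSimple, smul_zero]
      intro hface
      rw [isSimple_append, isSimple_append, isSimple_blockOfList_iff,
        List.length_eraseIdx_of_lt (Finset.mem_range.mp hj), List.length_cons] at hface
      have htwo := hlong hface.1.1 hface.2
      omega
    · intro hface
      rw [tildeB_eq_map_overB, isSimple_append, isSimple_append, isSimple_map_underB,
        isSimple_map_overB, isSimple_map_overB, isSimple_blockOfList_iff, List.length_map] at hface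
      have htwo := hlong hface.1.1 hface.2
      omega

theorem PhiFX_dPXval (hφ : ∀ g : G, φ g ∈ Subgroup.center G)
    (hcocycle : f.comp ((QuotientAddGroup.mk' _).comp (dgp (n + 2))) = 0) (x : M × G)
    {w : List (M × G × List G)} (hlen : lenW w = n + 2) :
    PhiFX φ n f (dPXval φ (x, w)) = 0 := by
  have hsplit (p : Fin w.length) : w.take p ++ w[p] :: w.drop (p + 1) = w := by
    rw [Fin.getElem_fin, List.getElem_cons_drop, List.take_append_drop]
  simp only [dPXval_eq_sum_boundaryTerm, map_sum, map_zsmul]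
  by_cases hw : IsSimple w
  · have hlength : w.length = n + 2 := hw.lenW_eq_length.symm.trans hlen
    rw [← sum_cubeEval_faces (twist hφ) hcocycle x.1 (L := w.map lead)
      (by rw [List.length_map, hlength])]
    refine Fintype.sum_equiv (finCongr (List.length_map lead).symm) _ _ fun p => ?_
    have htake : lenW (w.take p) = p := by
      rw [IsSimple.lenW_eq_length fun b hb => hw b (List.mem_of_mem_take hb),
        List.length_take_of_le p.2.le]
    rw [htake, PhiFX_boundaryTerm_of_isSimple hφ x (by rwa [hsplit]) (by rwa [hsplit])]
    simp [List.eraseIdx_eq_take_drop_succ]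
  · refine Finset.sum_eq_zero fun p _ => ?_
    rw [PhiFX_boundaryTerm_of_not_isSimple hφ x (by rwa [hsplit]) (by rwa [hsplit]), smul_zero]

end Boundary

section Weighted

variable {φ} {lam : G → A} {n : ℕ} {f : CgpG (G := G) (M := M) (n + 2) →+ A}

theorem PhiFLamX_of (z : (M × G) × List (M × G × List G)) :
    PhiFLamX φ lam n f (of z) = PhiFX φ n f (of z) ⊗ₜ[ℤ] lam z.1.2 := by
  simp only [PhiFLamX, PhiFX, AddMonoidHom.comp_apply, projX, FreeAbelianGroup.lift_apply_of]
  split_ifs with h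
  · simp [gammaMap, psiLam, psiG, psiFree]
  · simp

variable (φ lam f) in
/-- The chains on which `Φ_{f,λ}` is `Φ_f` tensored with the constant weight `a`. -/
noncomputable def weightSubgroup (a : A) :
    AddSubgroup (FreeAbelianGroup ((M × G) × List (M × G × List G))) :=
  (PhiFLamX φ lam n f).eqLocus
    (((TensorProduct.mk ℤ A A).flip a).toAddMonoidHom.comp (PhiFX φ n f))

theorem of_mem_weightSubgroup {a : A} {x : M × G} (hx : lam x.2 = a)
    (w : List (M × G × List G)) : of (x, w) ∈ weightSubgroup φ lam f a := by
  subst hx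
  exact PhiFLamX_of (x, w)

theorem PhiFLamX_eq_zero_of_mem_weightSubgroup {a : A}
    {z : FreeAbelianGroup ((M × G) × List (M × G × List G))} (hz : z ∈ weightSubgroup φ lam f a)
    (hzero : PhiFX φ n f z = 0) : PhiFLamX φ lam n f z = 0 := by
  have hweight : PhiFLamX φ lam n f z = PhiFX φ n f z ⊗ₜ[ℤ] a := hz
  rw [hweight, hzero, TensorProduct.zero_tmul]

theorem mergeExpandX_mem_weightSubgroup (x : M × G) (m : M) (la lb : List G)
    (w₁ w₂ : List (M × G × List G)) :
    mergeExpandX x m la lb w₁ w₂ ∈ weightSubgroup φ lam f (lam x.2) :=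
  AddSubgroup.sum_mem _ fun _ _ => AddSubgroup.zsmul_mem _ (of_mem_weightSubgroup rfl _) _

theorem dPXval_mem_weightSubgroup (hlam : ∀ g h : G, lam (h⁻¹ * g * h) = lam g) (x : M × G)
    (w : List (M × G × List G)) : dPXval φ (x, w) ∈ weightSubgroup φ lam f (lam x.2) := by
  rw [dPXval_eq_sum_boundaryTerm]
  refine AddSubgroup.sum_mem _ fun p _ => AddSubgroup.zsmul_mem _ (AddSubgroup.add_mem _ ?_ ?_) _
  · exact of_mem_weightSubgroup (hlam _ _) _
  · exact AddSubgroup.sum_mem _ fun _ _ =>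
      AddSubgroup.zsmul_mem _ (of_mem_weightSubgroup rfl _) _

end Weighted

section Cocycles

theorem map_eq_zero_of_mem_DsubX {G M B : Type*} [Group G] [AddCommGroup B] {n : ℕ}
    {F : FreeAbelianGroup ((M × G) × List (M × G × List G)) →+ B}
    (hF : ∀ (x : M × G) (w₁ w₂ : List (M × G × List G)) (m : M) (g : G) (gs : List G) (h : G)
      (hs : List G), lenW (w₁ ++ (m, g, gs) :: (m, h, hs) :: w₂) = n →
        F (of (x, w₁ ++ (m, g, gs) :: (m, h, hs) :: w₂) -
          mergeExpandX x m (g :: gs) (h :: hs) w₁ w₂) = 0)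
    {z : FreeAbelianGroup ((M × G) × List (M × G × List G))} (hz : z ∈ DsubX n) : F z = 0 := by
  refine (AddSubgroup.closure_le F.ker).mpr ?_ hz
  rintro _ ⟨x, w₁, w₂, m, g, gs, h, hs, hlen, rfl⟩
  exact hF x w₁ w₂ m g gs h hs hlen

theorem map_dPX_eq_zero_of_mem_PsubX {B : Type*} [AddCommGroup B] {n : ℕ}
    {F : FreeAbelianGroup ((M × G) × List (M × G × List G)) →+ B}
    (hF : ∀ (x : M × G) (w : List (M × G × List G)), lenW w = n → F (dPXval φ (x, w)) = 0)
    {z : FreeAbelianGroup ((M × G) × List (M × G × List G))} (hz : z ∈ PsubX n) :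
    F (dPX φ z) = 0 := by
  refine (AddSubgroup.closure_le (F.comp (dPX φ)).ker).mpr ?_ hz
  rintro _ ⟨⟨x, w⟩, hlen, rfl⟩
  change F (dPX φ (of (x, w))) = 0
  rw [dPX, FreeAbelianGroup.lift_apply_of]
  exact hF x w hlen

theorem PhiFX_of_sub_mergeExpandX {φ} {n : ℕ} {f : CgpG (G := G) (M := M) (n + 2) →+ A}
    (hφ : ∀ g : G, φ g ∈ Subgroup.center G)
    (hnorm : ∀ z ∈ DgpGsub (G := G) (M := M) (n + 2), f z = 0) (x : M × G)
    (w₁ w₂ : List (M × G × List G)) (m : M) (g : G) (gs : List G) (h : G) (hs : List G)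
    (hlen : lenW (w₁ ++ (m, g, gs) :: (m, h, hs) :: w₂) = n + 1) :
    PhiFX φ n f (of (x, w₁ ++ (m, g, gs) :: (m, h, hs) :: w₂) -
      mergeExpandX x m (g :: gs) (h :: hs) w₁ w₂) = 0 := by
  rw [map_sub, PhiFX_of_consecutive hφ hnorm x hlen, PhiFX_mergeExpandX, sub_zero]

theorem mcbX_cocycles_of_normalized_group_cocycle_general
    (hφ : ∀ g : G, φ g ∈ Subgroup.center G)
    (lam : G → A) (hlam : ∀ g h : G, lam (h⁻¹ * g * h) = lam g)
    (n : ℕ) (f : CgpG (G := G) (M := M) (n + 2) →+ A)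
    (hnorm : ∀ z ∈ DgpGsub (G := G) (M := M) (n + 2), f z = 0)
    (hcocycle : f.comp ((QuotientAddGroup.mk' (coinvSub (G := G) (M := M) (n + 2))).comp
      (dgp (M := M) (n + 2))) = 0) :
    (∀ z ∈ DsubX (G := G) (M := M) (n + 1), PhiFX φ n f z = 0) ∧
      (∀ z ∈ PsubX (G := G) (M := M) (n + 2), PhiFX φ n f (dPX φ z) = 0) ∧
      (∀ z ∈ DsubX (G := G) (M := M) (n + 1), PhiFLamX φ lam n f z = 0) ∧
      (∀ z ∈ PsubX (G := G) (M := M) (n + 2), PhiFLamX φ lam n f (dPX φ z) = 0) := by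
  refine ⟨fun z hz => map_eq_zero_of_mem_DsubX (PhiFX_of_sub_mergeExpandX hφ hnorm) hz,
    fun z hz => map_dPX_eq_zero_of_mem_PsubX φ
      (fun x w hlen => PhiFX_dPXval hφ hcocycle x hlen) hz,
    fun z hz => map_eq_zero_of_mem_DsubX (fun x w₁ w₂ m g gs h hs hlen => ?_) hz,
    fun z hz => map_dPX_eq_zero_of_mem_PsubX φ (fun x w hlen => ?_) hz⟩
  · exact PhiFLamX_eq_zero_of_mem_weightSubgroup
      (AddSubgroup.sub_mem _ (of_mem_weightSubgroup rfl _)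
        (mergeExpandX_mem_weightSubgroup x m _ _ w₁ w₂))
      (PhiFX_of_sub_mergeExpandX hφ hnorm x w₁ w₂ m g gs h hs hlen)
  · exact PhiFLamX_eq_zero_of_mem_weightSubgroup (dPXval_mem_weightSubgroup hlam x w)
      (PhiFX_dPXval hφ hcocycle x hlen)

end Cocycles

theorem map_conj_eq {lam : G → A} (hlam : ∀ g h : G, lam (g * h) = lam g + lam h) (g h : G) :
    lam (h⁻¹ * g * h) = lam g := by
  rw [mul_assoc, hlam, add_comm, ← hlam, mul_assoc, mul_inv_cancel, mul_one]

/-- Let `n ≥ 1` (encoded as `n+1` below), `λ : G → A` a group homomorphism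
and `f : C^{gp}_{n+1}(M;ℤ)_G → A` a normalized group `(n+1)`-cocycle.  Then both
`Φ_f = f ∘ ψ_n ∘ γ_n ∘ proj_n` and `Φ_{f,λ} = (f ⊗ id_A) ∘ ψ_{n,λ} ∘ γ_n ∘ proj_n` vanish
on `D_n(X;ℤ)_X` and kill the boundaries of `P_{n+1}(X;ℤ)_X`; that is, they define
`n`-cocycles of the `G`-Alexander multiple conjugation biquandle with `X`-set `X`. -/
theorem mcbX_cocycles_of_normalized_group_cocycle
    (hφ : ∀ g : G, φ g ∈ Subgroup.center G)
    (lam : G → A) (hlam : ∀ g h : G, lam (g * h) = lam g + lam h) :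
    ∀ (n : ℕ) (f : CgpG (G := G) (M := M) (n + 2) →+ A),
      (∀ z ∈ DgpGsub (G := G) (M := M) (n + 2), f z = 0) →
      f.comp ((QuotientAddGroup.mk' (coinvSub (G := G) (M := M) (n + 2))).comp
          (dgp (M := M) (n + 2))) = 0 →
      (∀ z ∈ DsubX (G := G) (M := M) (n + 1), PhiFX φ n f z = 0) ∧
        (∀ z ∈ PsubX (G := G) (M := M) (n + 2), PhiFX φ n f (dPX φ z) = 0) ∧
        (∀ z ∈ DsubX (G := G) (M := M) (n + 1), PhiFLamX φ lam n f z = 0) ∧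
        (∀ z ∈ PsubX (G := G) (M := M) (n + 2), PhiFLamX φ lam n f (dPX φ z) = 0) :=
  fun n f => mcbX_cocycles_of_normalized_group_cocycle_general φ hφ lam (map_conj_eq hlam) n f

end GAlex
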